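/- Let q = p^e with p prime and e a positive integer, and m = 2r with r ≥ 2, and set n = q^{r−1}(q^r − q + 1). If p does not divide r, then the code \overline{C_D}' generated by the rows of [I_{m+1} | G_1] has length n + m + 1, dimension m + 1, and minimum distance exactly q^{r−1}(q^r − q^{r−1} − q + 1) + 1. -/

import Mathlib

open scoped Classical

noncomputable section

/-- The dual code under the standard inner product. -/
def dualCode {ι F : Type*} [Fintype ι] [CommRing F] (C : Set (ι → F)) : Set (ι → F) :=
  {u | ∀ v ∈ C, ∑ i, u i * v i = 0}

/-- `d` is the minimum distance of the code `C`: the smallest Hamming weight of a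
nonzero codeword. -/
def IsMinDist {ι F : Type*} [Fintype ι] [CommRing F] (C : Set (ι → F)) (d : ℕ) : Prop :=
  (∃ c ∈ C, c ≠ 0 ∧ hammingNorm c = d) ∧ ∀ c ∈ C, c ≠ 0 → d ≤ hammingNorm c

/-- The code generated by the rows of the block matrix `[I_k | G]`: the codeword
attached to a coefficient vector `v : Fin k → F` is `v` on the first `k`
coordinates and `v * G` on the remaining coordinates. -/
def genCode {ι F : Type*} [Fintype ι] [CommRing F] (k : ℕ) (G : Fin k → ι → F) :
    Set ((Fin k ⊕ ι) → F) :=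
  {w | ∃ v : Fin k → F, w = Sum.elim v fun d => ∑ j, v j * G j d}

/-!
`D` is the zero set of the quadratic form `Q = Tr ∘ N` on `F_{q^m}`, where `N` is the norm to
`F_{q^r}`. As `N` is onto, each character sum `∑ x, ψ (y * Q x)` with `y ≠ 0` equals `-q ^ r`;
completing the square then counts the zeros of `Q` on the affine hyperplanes `Tr (b * x) = c`. There
are at most `q ^ (2 * r - 2)` of them, and exactly that many when `c = 0` and `Q b ≠ 0`. A row
`Tr (α ^ i * x)` of `G₁` with no constant term thus attains the minimum weight as soon as
`Q (α ^ i) ≠ 0`. Such an `i` occurs among `2, …, r + 1`: the element `N α` is primitive in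
`F_{q^r}`, so `r` consecutive powers of it form a basis, on which the trace cannot vanish.
-/

section CharacterSum

variable {F R V : Type*} [Field F] [CommRing R] {ψ : AddChar F R}

section Module

variable [AddCommGroup V] [Module F V]

theorem compAddMonoidHom_ne_one (hψ : ψ ≠ 1) {ℓ : V →ₗ[F] F}
    (hℓ : ℓ ≠ 0) : ψ.compAddMonoidHom ℓ.toAddMonoidHom ≠ 1 := by
  obtain ⟨t, ht⟩ := AddChar.ne_one_iff.1 hψ
  obtain ⟨x, rfl⟩ := LinearMap.surjective hℓ t
  exact AddChar.ne_one_iff.2 ⟨x, ht⟩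

theorem sum_addChar_quadraticForm_add_polar [Fintype V] (Q : QuadraticForm F V) {y : F} (hy : y ≠ 0)
    (z : F) (w : V) :
    ∑ x, ψ (y * Q x + z * QuadraticMap.polar Q w x) =
      ψ (-(z ^ 2 / y * Q w)) * ∑ x, ψ (y * Q x) := by
  rw [← Equiv.sum_comp (Equiv.addLeft ((z / y) • w)) fun x ↦ ψ (y * Q x), Finset.mul_sum]
  refine Finset.sum_congr rfl fun x _ ↦ ?_
  rw [← AddChar.map_add_eq_mul, Equiv.coe_addLeft, QuadraticMap.map_add Q, QuadraticMap.map_smul,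
    QuadraticMap.polar_smul_left, smul_eq_mul, smul_eq_mul]
  congr 1
  field_simp
  ring

end Module

variable [Fintype F]

theorem sum_eq_add_sum_units (f : F → R) : ∑ y, f y = f 0 + ∑ u : Fˣ, f u := by
  rw [Fintype.sum_eq_add_sum_subtype_ne f 0, ← unitsEquivNeZero.sum_comp]
  rfl

variable [IsDomain R]

theorem sum_units_addChar_mul (hψ : ψ.IsPrimitive) (b : F) :
    ∑ u : Fˣ, ψ (u * b) = (if b = 0 then (Fintype.card F : R) else 0) - 1 := by
  have h := AddChar.sum_mulShift b hψ
  rw [sum_eq_add_sum_units, zero_mul, AddChar.map_zero_eq_one] at h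
  rw [eq_sub_iff_add_eq', h]
  push_cast
  rfl

theorem sum_units_sum_addChar_neg_sq_div (hψ : ψ.IsPrimitive) (s c : F) :
    ∑ y : Fˣ, ∑ z : F, ψ (-(z ^ 2 / y * s) - z * c) =
      Fintype.card F * ((if s = 0 then (if c = 0 then Fintype.card F - 1 else 0)
        else (if c = 0 then 0 else 1) : ℕ) : R) := by
  have sum_over_y (z : F) : ∑ y : Fˣ, ψ (-(z ^ 2 / y * s) - z * c) =
      (if z ^ 2 * s = 0 then (Fintype.card F : R) else 0) * ψ (z * -c) - ψ (z * -c) := by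
    rw [← sub_one_mul, ← neg_eq_zero (a := z ^ 2 * s), ← sum_units_addChar_mul hψ,
      ← Equiv.sum_comp (Equiv.inv Fˣ), Finset.sum_mul]
    refine Finset.sum_congr rfl fun y _ ↦ ?_
    rw [← AddChar.map_add_eq_mul, Equiv.inv_apply, Units.val_inv_eq_inv_val, div_inv_eq_mul]
    congr 1
    ring
  rw [Finset.sum_comm]
  simp_rw [sum_over_y, Finset.sum_sub_distrib, AddChar.sum_mulShift (-c) hψ, neg_eq_zero]
  have card_pos : 1 ≤ Fintype.card F := Fintype.card_pos
  rcases eq_or_ne s 0 with rfl | hs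
  · simp_rw [mul_zero, if_true, ← Finset.mul_sum, AddChar.sum_mulShift (-c) hψ, neg_eq_zero]
    split_ifs
    · push_cast [card_pos]
      ring
    · simp
  · simp_rw [mul_eq_zero, sq_eq_zero_iff, hs, or_false, ite_mul, zero_mul,
      Finset.sum_ite_eq', Finset.mem_univ]
    by_cases hc : c = 0 <;> simp [hc]

variable [Fintype V]

theorem card_mul_card_filter_eq_zero (hψ : ψ.IsPrimitive) (f : V → F) :
    (Fintype.card F : R) * (Finset.univ.filter fun x ↦ f x = 0).card =
      ∑ y, ∑ x, ψ (y * f x) := by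
  rw [Finset.sum_comm]
  simp_rw [AddChar.sum_mulShift _ hψ]
  rw [← Nat.cast_sum, ← Finset.sum_filter, Finset.sum_const, smul_eq_mul, Nat.cast_mul, mul_comm]

theorem card_sq_mul_card_filter_eq_zero_and (hψ : ψ.IsPrimitive) (f h : V → F) :
    (Fintype.card F : R) ^ 2 * (Finset.univ.filter fun x ↦ f x = 0 ∧ h x = 0).card =
      ∑ y, ∑ z, ∑ x, ψ (y * f x + z * h x) := by
  have factor : ∑ y, ∑ z, ∑ x, ψ (y * f x + z * h x) =
      ∑ x, (∑ y, ψ (y * f x)) * ∑ z, ψ (z * h x) := by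
    simp_rw [AddChar.map_add_eq_mul, Finset.sum_mul_sum]
    rw [Finset.sum_congr rfl fun y _ ↦ Finset.sum_comm, Finset.sum_comm]
  simp_rw [factor, AddChar.sum_mulShift _ hψ, ← Nat.cast_mul, ite_zero_mul_ite_zero]
  rw [← Nat.cast_sum, ← Finset.sum_filter, Finset.sum_const, smul_eq_mul]
  push_cast
  ring

variable [AddCommGroup V] [Module F V] {Q : QuadraticForm F V} {K : R}

theorem card_mul_card_quadraticForm_eq_zero (hψ : ψ.IsPrimitive)
    (hK : ∀ y : F, y ≠ 0 → ∑ x, ψ (y * Q x) = K) :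
    (Fintype.card F : R) * (Finset.univ.filter fun x ↦ Q x = 0).card =
      Fintype.card V + (Fintype.card F - 1 : ℕ) * K := by
  rw [card_mul_card_filter_eq_zero hψ, sum_eq_add_sum_units,
    Fintype.sum_congr _ _ fun y : Fˣ ↦ hK y y.ne_zero]
  simp [Fintype.card_units]

theorem card_sq_mul_card_quadraticForm_eq_zero_and_polar_eq (hψ : ψ.IsPrimitive)
    (hK : ∀ y : F, y ≠ 0 → ∑ x, ψ (y * Q x) = K) {w : V} (hw : Q.polarBilin w ≠ 0) (c : F) :
    (Fintype.card F : R) ^ 2 *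
        (Finset.univ.filter fun x ↦ Q x = 0 ∧ QuadraticMap.polar Q w x = c).card =
      Fintype.card V + Fintype.card F * K *
        ((if Q w = 0 then (if c = 0 then Fintype.card F - 1 else 0)
          else (if c = 0 then 0 else 1) : ℕ) : R) := by
  have split_shift (y z : F) : ∑ x, ψ (y * Q x + z * (QuadraticMap.polar Q w x - c)) =
      (∑ x, ψ (y * Q x + z * QuadraticMap.polar Q w x)) * ψ (-(z * c)) := by
    simp_rw [Finset.sum_mul, ← AddChar.map_add_eq_mul]
    refine Finset.sum_congr rfl fun x _ ↦ ?_
    congr 1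
    ring
  have linear_sum (z : F) (hz : z ≠ 0) : ∑ x, ψ (z * QuadraticMap.polar Q w x) = 0 :=
    AddChar.sum_eq_zero_of_ne_one
      (compAddMonoidHom_ne_one (ψ := ψ.mulShift z) (hψ hz) hw)
  have y_zero : ∑ z, ∑ x, ψ (0 * Q x + z * (QuadraticMap.polar Q w x - c)) = Fintype.card V := by
    rw [Fintype.sum_eq_single 0 fun z hz ↦ ?_]
    · simp
    · rw [split_shift]
      simp [linear_sum z hz]
  have y_unit (y : Fˣ) : ∑ z, ∑ x, ψ (y * Q x + z * (QuadraticMap.polar Q w x - c)) =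
      K * ∑ z, ψ (-(z ^ 2 / y * Q w) - z * c) := by
    rw [Finset.mul_sum]
    refine Finset.sum_congr rfl fun z _ ↦ ?_
    rw [split_shift, sum_addChar_quadraticForm_add_polar Q y.ne_zero, hK y y.ne_zero,
      sub_eq_add_neg, AddChar.map_add_eq_mul]
    ring
  simp_rw [← sub_eq_zero (b := c)]
  rw [card_sq_mul_card_filter_eq_zero_and hψ, sum_eq_add_sum_units, y_zero]
  simp_rw [y_unit, ← Finset.mul_sum, sum_units_sum_addChar_neg_sq_div hψ]
  ring

end CharacterSum

section Norm

variable {E L R : Type*} [Field E] [Field L] [Fintype E] [Fintype L] [Algebra E L]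
  [CommRing R] [IsDomain R]

-- Every `a ≠ 0` is a norm, so the sum does not depend on `a`; averaging over `a` evaluates it.
theorem card_units_mul_sum_addChar_mul_norm {χ : AddChar E R} (hχ : χ ≠ 1) {a : E} (ha : a ≠ 0) :
    (Fintype.card E - 1 : R) * ∑ x : L, χ (a * Algebra.norm E x) =
      Fintype.card E - Fintype.card L := by
  have indep (u : Eˣ) :
      ∑ x : L, χ (u * Algebra.norm E x) = ∑ x : L, χ (a * Algebra.norm E x) := by
    obtain ⟨t, ht⟩ := FiniteField.norm_surjective E L (u / a)
    have t_ne : t ≠ 0 := by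
      rintro rfl
      rw [Algebra.norm_zero] at ht
      exact div_ne_zero u.ne_zero ha ht.symm
    rw [← Equiv.sum_comp (Equiv.mulLeft₀ t t_ne) fun x ↦ χ (a * Algebra.norm E x)]
    refine Finset.sum_congr rfl fun x _ ↦ ?_
    change _ = χ (a * Algebra.norm E (t * x))
    rw [map_mul (Algebra.norm E), ht, ← mul_assoc, mul_div_cancel₀ _ ha]
  calc (Fintype.card E - 1 : R) * ∑ x : L, χ (a * Algebra.norm E x)
      = ∑ u : Eˣ, ∑ x : L, χ (u * Algebra.norm E x) := by
        rw [Finset.sum_congr rfl fun u _ ↦ indep u, Finset.sum_const, Finset.card_univ,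
          Fintype.card_units, nsmul_eq_mul, Nat.cast_pred Fintype.card_pos]
    _ = ∑ x : L, ((if x = 0 then (Fintype.card E : R) else 0) - 1) := by
        rw [Finset.sum_comm]
        simp_rw [sum_units_addChar_mul (AddChar.IsPrimitive.of_ne_one hχ),
          Algebra.norm_eq_zero_iff]
    _ = Fintype.card E - Fintype.card L := by simp

variable (E) [Algebra.IsQuadraticExtension E L]

variable (L) in
theorem card_eq_card_sq_of_isQuadraticExtension : Fintype.card L = Fintype.card E ^ 2 := by
  rw [Module.card_eq_pow_finrank (K := E) (V := L),
    Algebra.IsQuadraticExtension.finrank_eq_two E L]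

theorem sum_addChar_mul_norm_of_isQuadraticExtension [CharZero R] {χ : AddChar E R} (hχ : χ ≠ 1)
    {a : E} (ha : a ≠ 0) : ∑ x : L, χ (a * Algebra.norm E x) = -Fintype.card E := by
  have card_sub_one_ne : (Fintype.card E - 1 : R) ≠ 0 :=
    sub_ne_zero.2 (Nat.cast_ne_one.2 Fintype.one_lt_card.ne')
  apply mul_left_cancel₀ card_sub_one_ne
  rw [card_units_mul_sum_addChar_mul_norm hχ ha, card_eq_card_sq_of_isQuadraticExtension E L]
  push_cast
  ring

end Norm

section QuadraticExtension

variable {E L : Type*} [Field E] [Field L] [Fintype E] [Finite L] [Algebra E L]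
  [Algebra.IsQuadraticExtension E L]

theorem algebraMap_norm_eq_pow_card_add_one (x : L) :
    algebraMap E L (Algebra.norm E x) = x ^ (Fintype.card E + 1) := by
  simp [FiniteField.algebraMap_norm_eq_pow_sum, Algebra.IsQuadraticExtension.finrank_eq_two,
    Finset.sum_range_succ, add_comm]

theorem algebraMap_trace_eq_add_pow_card (x : L) :
    algebraMap E L (Algebra.trace E L x) = x + x ^ Fintype.card E := by
  simp [FiniteField.algebraMap_trace_eq_sum_pow, Algebra.IsQuadraticExtension.finrank_eq_two,
    Finset.sum_range_succ]

variable (E) in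
theorem pow_card_pow_card_of_isQuadraticExtension (x : L) :
    (x ^ Fintype.card E) ^ Fintype.card E = x := by
  have := Fintype.ofFinite L
  rw [← pow_mul, ← sq, ← card_eq_card_sq_of_isQuadraticExtension E L, FiniteField.pow_card]

theorem norm_add_eq_add_trace_mul_pow_card (x y : L) : Algebra.norm E (x + y) =
    Algebra.norm E x + Algebra.norm E y + Algebra.trace E L (x * y ^ Fintype.card E) := by
  have frobenius_add : (x + y) ^ Fintype.card E = x ^ Fintype.card E + y ^ Fintype.card E :=
    map_add (FiniteField.frobeniusAlgHom E L) x y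
  apply (algebraMap E L).injective
  simp only [map_add, algebraMap_norm_eq_pow_card_add_one, algebraMap_trace_eq_add_pow_card,
    pow_succ, frobenius_add, mul_pow, pow_card_pow_card_of_isQuadraticExtension E]
  ring

theorem eq_norm_of_algebraMap_eq_pow {g : L → E}
    (hg : ∀ x, algebraMap E L (g x) = x ^ (Fintype.card E + 1)) : g = Algebra.norm E :=
  funext fun x ↦ (algebraMap E L).injective <| (hg x).trans
    (algebraMap_norm_eq_pow_card_add_one x).symm

end QuadraticExtension

section TraceNormForm

variable (K E L : Type*) [Field K] [Field E] [Field L] [Finite L]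
  [Algebra K E] [Algebra E L] [Algebra K L] [IsScalarTower K E L]
  [Algebra.IsQuadraticExtension E L]

theorem polar_trace_norm [Fintype E] (x y : L) :
    QuadraticMap.polar (fun x ↦ Algebra.trace K E (Algebra.norm E x)) x y =
      Algebra.trace K L (x * y ^ Fintype.card E) := by
  rw [QuadraticMap.polar, norm_add_eq_add_trace_mul_pow_card, map_add, map_add, Algebra.trace_trace]
  ring

/-- The quadratic form `x ↦ Tr_{E/K}(N_{L/E}(x))` over `K` attached to a tower `K ⊆ E ⊆ L` of
finite fields with `L/E` quadratic. -/
def traceNormForm [Finite E] : QuadraticForm K L :=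
  QuadraticMap.ofPolar (fun x ↦ Algebra.trace K E (Algebra.norm E x))
    (fun a x ↦ by
      rw [← algebraMap_smul E a x, Algebra.smul_def, map_mul, Algebra.norm_algebraMap,
        Algebra.IsQuadraticExtension.finrank_eq_two, ← map_pow, ← Algebra.smul_def, map_smul, sq])
    (fun x y z ↦ by
      have := Fintype.ofFinite E
      simp only [polar_trace_norm, add_mul, map_add])
    (fun a x y ↦ by
      have := Fintype.ofFinite E
      simp only [polar_trace_norm, smul_mul_assoc, map_smul])

variable {L}

theorem traceNormForm_apply [Finite E] (x : L) :
    traceNormForm K E L x = Algebra.trace K E (Algebra.norm E x) := rfl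

variable [Fintype E]

theorem traceNormForm_pow_card (x : L) :
    traceNormForm K E L (x ^ Fintype.card E) = traceNormForm K E L x := by
  rw [traceNormForm_apply, map_pow, FiniteField.pow_card, traceNormForm_apply]

theorem polar_traceNormForm_pow_card (x y : L) :
    QuadraticMap.polar (traceNormForm K E L) (x ^ Fintype.card E) y =
      Algebra.trace K L (x * y) := by
  rw [QuadraticMap.polar_comm, mul_comm]
  exact (polar_trace_norm K E L _ _).trans (by rw [pow_card_pow_card_of_isQuadraticExtension])

theorem polarBilin_traceNormForm_pow_card_ne_zero [Finite K] {b : L} (hb : b ≠ 0) :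
    (traceNormForm K E L).polarBilin (b ^ Fintype.card E) ≠ 0 := by
  obtain ⟨x, hx⟩ := Algebra.trace_surjective K L 1
  intro h
  have polar_eq_zero := LinearMap.congr_fun h (b⁻¹ * x)
  rw [QuadraticMap.polarBilin_apply_apply, polar_traceNormForm_pow_card, mul_inv_cancel_left₀ hb,
    hx] at polar_eq_zero
  exact one_ne_zero polar_eq_zero

end TraceNormForm

section CharacterSumCount

variable (K E L : Type*) [Field K] [Field E] [Field L] [Fintype E] [Fintype L]
  [Algebra K E] [Algebra E L] [Algebra K L] [IsScalarTower K E L]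
  [Algebra.IsQuadraticExtension E L]

theorem sum_addChar_mul_traceNormForm [Finite K] {R : Type*} [CommRing R] [IsDomain R] [CharZero R]
    {ψ : AddChar K R} (hψ : ψ.IsPrimitive) {y : K} (hy : y ≠ 0) :
    ∑ x, ψ (y * traceNormForm K E L x) = -Fintype.card E := by
  simpa using! sum_addChar_mul_norm_of_isQuadraticExtension (L := L) E
    (compAddMonoidHom_ne_one (hψ hy) (Algebra.trace_ne_zero K E)) one_ne_zero

variable [Fintype K]

theorem card_mul_card_traceNormForm_eq_zero :
    Fintype.card K * (Finset.univ.filter fun x ↦ traceNormForm K E L x = 0).card +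
      (Fintype.card K - 1) * Fintype.card E = Fintype.card E ^ 2 := by
  have ψ_primitive := AddChar.FiniteField.primitiveChar_to_Complex_isPrimitive K
  have count := card_mul_card_quadraticForm_eq_zero ψ_primitive
    fun _ ↦ sum_addChar_mul_traceNormForm K E L ψ_primitive
  rw [card_eq_card_sq_of_isQuadraticExtension E L, Nat.cast_pow] at count
  rw [← Nat.cast_inj (R := ℂ), Nat.cast_add, Nat.cast_mul, Nat.cast_mul, Nat.cast_pow]
  linear_combination count

variable {L} in
theorem card_sq_mul_card_traceNormForm_eq_zero_and_trace_mul_eq {b : L} (hb : b ≠ 0) (c : K) :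
    Fintype.card K ^ 2 * (Finset.univ.filter fun x ↦
        traceNormForm K E L x = 0 ∧ Algebra.trace K L (b * x) = c).card +
      Fintype.card K * Fintype.card E * (if traceNormForm K E L b = 0
        then (if c = 0 then Fintype.card K - 1 else 0) else (if c = 0 then 0 else 1)) =
      Fintype.card E ^ 2 := by
  have ψ_primitive := AddChar.FiniteField.primitiveChar_to_Complex_isPrimitive K
  have count := card_sq_mul_card_quadraticForm_eq_zero_and_polar_eq ψ_primitive
    (fun _ ↦ sum_addChar_mul_traceNormForm K E L ψ_primitive)
    (polarBilin_traceNormForm_pow_card_ne_zero K E hb) c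
  simp only [polar_traceNormForm_pow_card, traceNormForm_pow_card,
    card_eq_card_sq_of_isQuadraticExtension E L] at count
  rw [← Nat.cast_inj (R := ℂ), Nat.cast_add, Nat.cast_mul, Nat.cast_mul, Nat.cast_pow, Nat.cast_mul]
  linear_combination count

theorem card_sq_eq_card_sq_mul_pow :
    Fintype.card E ^ 2 = Fintype.card K ^ 2 * Fintype.card K ^ (2 * (Module.finrank K E - 1)) := by
  have finrank_pos : 0 < Module.finrank K E := Module.finrank_pos
  rw [Module.card_eq_pow_finrank (K := K) (V := E), ← pow_mul, ← pow_add]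
  congr 1
  omega

end CharacterSumCount

section TowerOfFiniteFields

variable (K E L : Type*) [Field K] [Field E] [Field L] [Fintype K] [Finite E] [Fintype L]
  [Algebra K E] [Algebra E L] [Algebra K L] [IsScalarTower K E L]
  [Algebra.IsQuadraticExtension E L]

theorem card_subtype_trace_norm_eq_zero :
    Fintype.card {x : L // Algebra.trace K E (Algebra.norm E x) = 0} =
      Fintype.card K ^ (Module.finrank K E - 1) *
        (Fintype.card K ^ Module.finrank K E - Fintype.card K + 1) := by
  have := Fintype.ofFinite E
  have count : Fintype.card K * Fintype.card {x : L // Algebra.trace K E (Algebra.norm E x) = 0} +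
      (Fintype.card K - 1) * Fintype.card E = Fintype.card E ^ 2 := by
    rw [Fintype.card_subtype]
    exact card_mul_card_traceNormForm_eq_zero K E L
  obtain ⟨s, hs⟩ := Nat.exists_eq_add_one_of_ne_zero (Module.finrank_pos (R := K) (M := E)).ne'
  have card_le : Fintype.card K ≤ Fintype.card K ^ (s + 1) := Nat.le_self_pow s.succ_ne_zero _
  rw [Module.card_eq_pow_finrank (K := K) (V := E), hs] at count
  rw [hs, Nat.add_sub_cancel]
  refine Nat.eq_of_mul_eq_mul_left (Fintype.card_pos (α := K)) ?_
  zify [card_le, Fintype.card_pos (α := K)] at count ⊢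
  linear_combination count

variable {L}

theorem card_traceNormForm_eq_zero_and_trace_mul_eq_le {b : L} (hb : b ≠ 0) (c : K) :
    (Finset.univ.filter fun x ↦
        traceNormForm K E L x = 0 ∧ Algebra.trace K L (b * x) = c).card ≤
      Fintype.card K ^ (2 * (Module.finrank K E - 1)) := by
  have := Fintype.ofFinite E
  refine Nat.le_of_mul_le_mul_left ?_ (pow_pos (Fintype.card_pos (α := K)) 2)
  rw [← card_sq_eq_card_sq_mul_pow K E]
  exact le_self_add.trans_eq (card_sq_mul_card_traceNormForm_eq_zero_and_trace_mul_eq K E hb c)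

theorem card_traceNormForm_eq_zero_and_trace_mul_eq_zero_of_ne_zero {b : L}
    (hb : traceNormForm K E L b ≠ 0) :
    (Finset.univ.filter fun x ↦
        traceNormForm K E L x = 0 ∧ Algebra.trace K L (b * x) = 0).card =
      Fintype.card K ^ (2 * (Module.finrank K E - 1)) := by
  have := Fintype.ofFinite E
  have b_ne_zero : b ≠ 0 := by
    rintro rfl
    exact hb (map_zero _)
  refine Nat.eq_of_mul_eq_mul_left (pow_pos (Fintype.card_pos (α := K)) 2) ?_
  rw [← card_sq_eq_card_sq_mul_pow K E,
    ← card_sq_mul_card_traceNormForm_eq_zero_and_trace_mul_eq K E b_ne_zero 0, if_neg hb,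
    if_pos rfl, mul_zero, add_zero]

end TowerOfFiniteFields

section PrimitiveElement

open IntermediateField

variable {K L : Type*} [Field K] [Field L] [Algebra K L] {α : L}

variable (K) in
theorem adjoin_simple_eq_top_of_forall_exists_pow_eq (hα : ∀ y : L, y ≠ 0 → ∃ k : ℕ, α ^ k = y) :
    K⟮α⟯ = ⊤ := by
  refine eq_top_iff.2 fun y _ ↦ ?_
  rcases eq_or_ne y 0 with rfl | hy
  · exact zero_mem _
  · obtain ⟨k, rfl⟩ := hα y hy
    exact pow_mem (mem_adjoin_simple_self K α) k

variable [FiniteDimensional K L]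

theorem linearIndependent_pow_of_adjoin_simple_eq_top (hα : K⟮α⟯ = ⊤) :
    LinearIndependent K fun i : Fin (Module.finrank K L) ↦ α ^ (i : ℕ) := by
  have natDegree_eq : (minpoly K α).natDegree = Module.finrank K L := by
    rw [← adjoin.finrank (Algebra.IsIntegral.isIntegral α), hα, finrank_top']
  exact natDegree_eq ▸ linearIndependent_pow α

theorem exists_trace_mul_pow_ne_zero [Algebra.IsSeparable K L] (hα : K⟮α⟯ = ⊤) {y : L}
    (hy : y ≠ 0) : ∃ i < Module.finrank K L, Algebra.trace K L (y * α ^ i) ≠ 0 := by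
  by_contra! trace_eq_zero
  have powers_independent := linearIndependent_pow_of_adjoin_simple_eq_top hα
  have powers_span := powers_independent.span_eq_top_of_card_eq_finrank' (Fintype.card_fin _)
  have trace_mul_eq_zero : Algebra.traceForm K L y = 0 :=
    LinearMap.ext_on_range powers_span fun i ↦ trace_eq_zero i i.isLt
  exact hy ((traceForm_nondegenerate K L).1 y fun x ↦ LinearMap.congr_fun trace_mul_eq_zero x)

end PrimitiveElement

theorem exists_traceNormForm_pow_ne_zero (K E : Type*) {L : Type*} [Field K] [Field E] [Field L]
    [Finite K] [Finite E] [Finite L] [Algebra K E] [Algebra E L] [Algebra K L]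
    [IsScalarTower K E L] [Algebra.IsQuadraticExtension E L] {α : L}
    (hα : ∀ y : L, y ≠ 0 → ∃ k : ℕ, α ^ k = y) (k : ℕ) :
    ∃ i < Module.finrank K E, traceNormForm K E L (α ^ (k + i)) ≠ 0 := by
  have norm_primitive (y : E) (hy : y ≠ 0) : ∃ k : ℕ, Algebra.norm E α ^ k = y := by
    obtain ⟨x, rfl⟩ := FiniteField.norm_surjective E L y
    obtain ⟨k, rfl⟩ := hα x (Algebra.norm_ne_zero_iff.1 hy)
    exact ⟨k, (map_pow _ _ _).symm⟩
  have α_ne_zero : α ≠ 0 := by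
    rintro rfl
    have bot_eq_top := adjoin_simple_eq_top_of_forall_exists_pow_eq E hα
    rw [IntermediateField.adjoin_zero, IntermediateField.bot_eq_top_iff_finrank_eq_one,
      Algebra.IsQuadraticExtension.finrank_eq_two] at bot_eq_top
    exact absurd bot_eq_top (by decide)
  simpa only [traceNormForm_apply, pow_add, map_mul, map_pow] using
    exists_trace_mul_pow_ne_zero (adjoin_simple_eq_top_of_forall_exists_pow_eq K norm_primitive)
      (pow_ne_zero k (Algebra.norm_ne_zero_iff.2 α_ne_zero))

section Code

variable {ι F : Type*} [Fintype ι]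

theorem hammingNorm_sumElim {κ : Type*} [Fintype κ] [Zero F] (v : κ → F) (w : ι → F) :
    hammingNorm (Sum.elim v w) = hammingNorm v + hammingNorm w := by
  simp only [hammingNorm, Finset.card_filter, Fintype.sum_sum_type, Sum.elim_inl, Sum.elim_inr]
  congr!

variable [CommRing F] {k : ℕ} {G : Fin k → ι → F}

variable (G) in
theorem card_genCode : Nat.card (genCode k G) = Nat.card F ^ k := by
  have genCode_eq_range :
      genCode k G = Set.range fun v : Fin k → F ↦ Sum.elim v fun x ↦ ∑ j, v j * G j x :=
    Set.ext fun _ ↦ exists_congr fun _ ↦ eq_comm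
  have encode_injective :
      Function.Injective fun v : Fin k → F ↦ Sum.elim v fun x ↦ ∑ j, v j * G j x :=
    fun v w h ↦ funext fun i ↦ congrFun h (Sum.inl i)
  rw [genCode_eq_range, Nat.card_range_of_injective encode_injective, Nat.card_fun, Nat.card_fin]

theorem isMinDist_genCode_add_one [Nontrivial F] {d : ℕ}
    (hle : ∀ v : Fin k → F, v ≠ 0 → d ≤ hammingNorm fun x ↦ ∑ j, v j * G j x)
    {i : Fin k} (hi : hammingNorm (G i) = d) : IsMinDist (genCode k G) (d + 1) := by
  have row_mem : Sum.elim (Pi.single i 1) (G i) ∈ genCode k G :=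
    ⟨Pi.single i 1, by simp [Pi.single_apply]⟩
  have single_weight : hammingNorm (Pi.single i (1 : F) : Fin k → F) = 1 := by
    simp_rw [hammingNorm, Pi.single_apply, ite_ne_right_iff, ne_eq, one_ne_zero, not_false_eq_true,
      and_true, Finset.filter_eq']
    simp
  have row_weight : hammingNorm (Sum.elim (Pi.single i 1) (G i)) = d + 1 := by
    rw [hammingNorm_sumElim, single_weight, hi, add_comm]
  have row_ne_zero : Sum.elim (Pi.single i 1) (G i) ≠ 0 :=
    hammingNorm_ne_zero_iff.1 (row_weight ▸ d.succ_ne_zero)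
  refine ⟨⟨_, row_mem, row_ne_zero, row_weight⟩, ?_⟩
  rintro _ ⟨v, rfl⟩ hw
  have v_ne_zero : v ≠ 0 := by
    rintro rfl
    exact hw (by ext (_ | _) <;> simp)
  rw [hammingNorm_sumElim, add_comm]
  exact add_le_add (hammingNorm_pos_iff.2 v_ne_zero) (hle v v_ne_zero)

end Code

section AffineTraceCode

variable {K L : Type*} [Field K] [Field L] [Algebra K L]

/-- The matrix, with columns indexed by the `x` satisfying `P`, whose row `0` is constant equal to
`1` and whose row `i + 1` is `Tr(e i * x) + s i`. -/
def affineTraceMatrix {m : ℕ} (P : L → Prop) (e : Fin m → L) (s : Fin m → K) :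
    Fin (m + 1) → Subtype P → K :=
  Fin.cons 1 fun i x ↦ Algebra.trace K L (e i * x) + s i

theorem sum_mul_affineTraceMatrix {m : ℕ} {P : L → Prop} (e : Fin m → L) (s : Fin m → K)
    (v : Fin (m + 1) → K) (x : Subtype P) :
    ∑ j, v j * affineTraceMatrix P e s j x =
      Algebra.trace K L ((∑ i, v i.succ • e i) * x) + (v 0 + ∑ i, v i.succ * s i) := by
  simp only [affineTraceMatrix, Fin.sum_univ_succ, Fin.cons_zero, Fin.cons_succ, Pi.one_apply,
    mul_add, Finset.sum_add_distrib, Finset.sum_mul, map_sum, smul_mul_assoc, map_smul, smul_eq_mul]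
  ring

variable [Fintype L]

theorem hammingNorm_trace_mul_add (P : L → Prop) (b : L) (c : K) :
    hammingNorm (fun x : Subtype P ↦ Algebra.trace K L (b * x) + c) = Fintype.card (Subtype P) -
      (Finset.univ.filter fun x ↦ P x ∧ Algebra.trace K L (b * x) = -c).card := by
  have zeros_eq : (Finset.univ.filter fun x ↦ P x ∧ Algebra.trace K L (b * x) = -c) =
      (Finset.univ.filter fun x : Subtype P ↦ Algebra.trace K L (b * x) + c = 0).map
        (Function.Embedding.subtype P) := by
    ext x
    simp [eq_neg_iff_add_eq_zero, and_comm]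
  rw [zeros_eq, Finset.card_map, ← Finset.card_univ,
    ← Finset.card_filter_add_card_filter_not (s := Finset.univ) fun x : Subtype P ↦
      Algebra.trace K L (b * x) + c = 0, Nat.add_sub_cancel_left]
  rfl

theorem isMinDist_genCode_affineTraceMatrix {m N : ℕ} {P : L → Prop} {e : Fin m → L}
    {s : Fin m → K} (he : LinearIndependent K e)
    (hN : ∀ b : L, b ≠ 0 → ∀ c : K,
      (Finset.univ.filter fun x ↦ P x ∧ Algebra.trace K L (b * x) = c).card ≤ N)
    {i : Fin m} (hs : s i = 0)
    (hi : (Finset.univ.filter fun x ↦ P x ∧ Algebra.trace K L (e i * x) = 0).card = N) :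
    IsMinDist (genCode (m + 1) (affineTraceMatrix P e s)) (Fintype.card (Subtype P) - N + 1) := by
  refine isMinDist_genCode_add_one (fun v hv ↦ ?_) (i := i.succ) ?_
  · simp_rw [sum_mul_affineTraceMatrix, hammingNorm_trace_mul_add]
    refine Nat.sub_le_sub_left ?_ _
    by_cases hb : ∑ i, v i.succ • e i = 0
    · have tail_eq_zero := Fintype.linearIndependent_iff.1 he _ hb
      have head_ne_zero : v 0 ≠ 0 := fun head_eq_zero ↦
        hv (funext (Fin.cases head_eq_zero tail_eq_zero))
      simp [tail_eq_zero, zero_eq_neg, head_ne_zero]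
    · exact hN _ hb _
  · simp only [affineTraceMatrix, Fin.cons_succ, hammingNorm_trace_mul_add, hs, neg_zero, hi]

end AffineTraceCode

theorem pow_mul_sub_add_one_sub_pow {q r : ℕ} (hq : 1 < q) (hr : 2 ≤ r) :
    q ^ (r - 1) * (q ^ r - q + 1) - q ^ (2 * (r - 1)) =
      q ^ (r - 1) * (q ^ r - q ^ (r - 1) - q + 1) := by
  have le_pow : q ≤ q ^ (r - 1) := Nat.le_self_pow (by omega) q
  have two_mul_le : q ^ (r - 1) * 2 ≤ q ^ r :=
    (Nat.mul_le_mul_left _ hq).trans_eq (pow_sub_one_mul (by omega) q)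
  rw [two_mul, pow_add, ← Nat.mul_sub]
  congr 1
  omega

theorem isMinDist_genCode_affineTraceMatrix_traceNorm {K E L : Type*} [Field K] [Field E] [Field L]
    [Fintype K] [Finite E] [Fintype L] [Algebra K E] [Algebra E L] [Algebra K L]
    [IsScalarTower K E L] [Algebra.IsQuadraticExtension E L] (hr : 2 ≤ Module.finrank K E)
    {m : ℕ} {e : Fin m → L} (he : LinearIndependent K e) {s : Fin m → K} {i : Fin m}
    (hs : s i = 0) (hi : traceNormForm K E L (e i) ≠ 0) :
    IsMinDist (genCode (m + 1)
        (affineTraceMatrix (fun x ↦ Algebra.trace K E (Algebra.norm E x) = 0) e s))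
      (Fintype.card K ^ (Module.finrank K E - 1) * (Fintype.card K ^ Module.finrank K E -
        Fintype.card K ^ (Module.finrank K E - 1) - Fintype.card K + 1) + 1) := by
  rw [← pow_mul_sub_add_one_sub_pow Fintype.one_lt_card hr,
    ← card_subtype_trace_norm_eq_zero K E L]
  exact isMinDist_genCode_affineTraceMatrix he
    (fun _ hb c ↦ card_traceNormForm_eq_zero_and_trace_mul_eq_le K E hb c) hs
    (card_traceNormForm_eq_zero_and_trace_mul_eq_zero_of_ne_zero K E hi)

theorem finrank_eq_of_card_eq_pow {K V : Type*} [Field K] [Fintype K] [Fintype V] [AddCommGroup V]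
    [Module K V] {n : ℕ} (h : Fintype.card V = Fintype.card K ^ n) : Module.finrank K V = n := by
  rw [Module.card_eq_pow_finrank (K := K)] at h
  exact Nat.pow_right_injective Fintype.one_lt_card h

theorem stmt10_general {q r : ℕ} (hr : 2 ≤ r)
    {Fq Fr Fm : Type*} [Field Fq] [Field Fr] [Field Fm] [Fintype Fq] [Fintype Fr] [Fintype Fm]
    [Algebra Fq Fr] [Algebra Fr Fm] [Algebra Fq Fm] [IsScalarTower Fq Fr Fm]
    (hcq : Fintype.card Fq = q) (hcr : Fintype.card Fr = q ^ r)
    (hcm : Fintype.card Fm = q ^ (2 * r))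
    {g : Fm → Fr} (hg : ∀ x : Fm, algebraMap Fr Fm (g x) = x ^ (q ^ r + 1))
    {α : Fm} (hα : ∀ y : Fm, y ≠ 0 → ∃ k : ℕ, α ^ k = y)
    {G1 : Fin (2 * r + 1) → {x : Fm // Algebra.trace Fq Fr (g x) = 0} → Fq}
    (hG1 : ∀ k d, G1 k d =
      if (k : ℕ) = 0 then 1
      else Algebra.trace Fq Fm (α ^ ((k : ℕ) - 1) * d.1)
        + (if (k : ℕ) = 2 then 1 else 0)) :
    Fintype.card (Fin (2 * r + 1) ⊕ {x : Fm // Algebra.trace Fq Fr (g x) = 0})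
      = q ^ (r - 1) * (q ^ r - q + 1) + 2 * r + 1 ∧
    Nat.card (genCode (2 * r + 1) G1) = q ^ (2 * r + 1) ∧
    IsMinDist (genCode (2 * r + 1) G1)
      (q ^ (r - 1) * (q ^ r - q ^ (r - 1) - q + 1) + 1) := by
  subst hcq
  have finrank_two : Module.finrank Fr Fm = 2 :=
    finrank_eq_of_card_eq_pow (by rw [hcm, hcr, ← pow_mul, mul_comm])
  have : Algebra.IsQuadraticExtension Fr Fm := ⟨finrank_two⟩
  have finrank_eq : Module.finrank Fq Fm = 2 * r := finrank_eq_of_card_eq_pow hcm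
  obtain rfl : Module.finrank Fq Fr = r := finrank_eq_of_card_eq_pow hcr
  obtain rfl : g = Algebra.norm Fr := eq_norm_of_algebraMap_eq_pow (by rwa [hcr])
  obtain rfl : G1 = affineTraceMatrix (fun x ↦ Algebra.trace Fq Fr (Algebra.norm Fr x) = 0)
      (fun i ↦ α ^ (i : ℕ)) (fun i ↦ if (i : ℕ) = 1 then 1 else 0) := by
    ext k x
    cases k using Fin.cases <;> simp [hG1, affineTraceMatrix]
  refine ⟨?_, ?_, ?_⟩
  · rw [Fintype.card_sum, Fintype.card_fin, card_subtype_trace_norm_eq_zero, add_comm, add_assoc]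
  · rw [card_genCode, Nat.card_eq_fintype_card]
  · obtain ⟨i, hi, form_ne_zero⟩ := exists_traceNormForm_pow_ne_zero Fq Fr hα 2
    exact isMinDist_genCode_affineTraceMatrix_traceNorm hr
      (finrank_eq ▸ linearIndependent_pow_of_adjoin_simple_eq_top
        (adjoin_simple_eq_top_of_forall_exists_pow_eq Fq hα))
      (i := ⟨2 + i, by omega⟩) (if_neg (by dsimp only; omega)) form_ne_zero

theorem stmt10 (p a q r m n : ℕ) (hp : p.Prime) (ha : 0 < a) (hqpa : q = p ^ a)
    (hr : 2 ≤ r) (hm : m = 2 * r) (hpr : ¬ p ∣ r)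
    (hn : n = q ^ (r - 1) * (q ^ r - q + 1))
    (Fq Fr Fm : Type) [Field Fq] [Field Fr] [Field Fm]
    [Fintype Fq] [Fintype Fr] [Fintype Fm]
    [Algebra Fq Fr] [Algebra Fr Fm] [Algebra Fq Fm] [IsScalarTower Fq Fr Fm]
    (hcq : Fintype.card Fq = q) (hcr : Fintype.card Fr = q ^ r)
    (hcm : Fintype.card Fm = q ^ m)
    (g : Fm → Fr) (hg : ∀ x : Fm, algebraMap Fr Fm (g x) = x ^ (q ^ r + 1))
    -- `α` is a primitive element of `F_{q^m}`
    (α : Fm) (hα : ∀ y : Fm, y ≠ 0 → ∃ k : ℕ, α ^ k = y)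
    -- the matrix `G₁`
    (G1 : Fin (m + 1) → {x : Fm // Algebra.trace Fq Fr (g x) = 0} → Fq)
    (hG1 : ∀ k d, G1 k d =
      if (k : ℕ) = 0 then 1
      else Algebra.trace Fq Fm (α ^ ((k : ℕ) - 1) * d.1)
        + (if (k : ℕ) = 2 then 1 else 0))
    (C' : Set ((Fin (m + 1) ⊕ {x : Fm // Algebra.trace Fq Fr (g x) = 0}) → Fq))
    (hC' : C' = genCode (m + 1) G1) :
    -- length `n + m + 1`
    Fintype.card (Fin (m + 1) ⊕ {x : Fm // Algebra.trace Fq Fr (g x) = 0})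
      = n + m + 1 ∧
    -- dimension `m + 1`
    Nat.card C' = q ^ (m + 1) ∧
    -- minimum distance exactly `q^{r-1}(q^r - q^{r-1} - q + 1) + 1`
    IsMinDist C' (q ^ (r - 1) * (q ^ r - q ^ (r - 1) - q + 1) + 1) := by
  subst hm hn hC'
  exact stmt10_general hr hcq hcr hcm hg hα hG1
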